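/- Every irreducible homogeneous polynomial F ∈ ℂ[x₁,x₂,x₃] of degree ≥ 1 satisfying d_H(F) = P·F for some P ∈ ℂ[x₁,x₂,x₃] is a nonzero scalar multiple of one of F₁ = x₁−x₂, F₂ = x₂−x₃, F₃ = x₃−x₁. -/

import Mathlib

/-!
The planes `x_{k+1} = x_{k+2}` (indices modulo `3`) are invariant under the Halphen derivation. On
such a plane, with coordinates `x = x_{k+1} = x_{k+2}` and `y = x_k`, it restricts to a derivation
that multiplies the lexicographically leading monomial `x ^ r * y ^ n` of any polynomial by
`-(2 * n + r) * x` and creates no higher power of `y`. Hence the restriction of a Darboux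
polynomial `F` to the plane either vanishes, so that `x_{k+1} - x_{k+2}` divides `F`, or has a
cofactor `-s * x` with `s = 2 * n + r`.

If none of the three linear forms divides `F`, this holds on all three planes. The cofactor of `F`
has degree at most `1`, and comparing coefficients shows that it is zero. So `F` is a first
integral. It is then constant on the plane `x_{k+1} = x_{k+2}`; subtracting that constant gives a
first integral divisible by `x_{k+1} - x_{k+2}`. Each division by this form adds `2 * x_k` to the
cofactor, so the cofactor stays a nonzero multiple of `x_k` and the division can be repeated
forever; hence the first integral minus its constant is zero.
-/

open MvPolynomial

/-- Components of the Halphen vector field: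
`V₁ = x₂x₃ − x₁(x₂+x₃)`, `V₂ = x₃x₁ − x₂(x₃+x₁)`, `V₃ = x₁x₂ − x₃(x₁+x₂)`. -/
noncomputable def V1 : MvPolynomial (Fin 3) ℂ := X 1 * X 2 - X 0 * (X 1 + X 2)
noncomputable def V2 : MvPolynomial (Fin 3) ℂ := X 2 * X 0 - X 1 * (X 2 + X 0)
noncomputable def V3 : MvPolynomial (Fin 3) ℂ := X 0 * X 1 - X 2 * (X 0 + X 1)

/-- The Halphen derivation `d_H(F) = V₁∂₁F + V₂∂₂F + V₃∂₃F` on `ℂ[x₁,x₂,x₃]`. -/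
noncomputable def dH (F : MvPolynomial (Fin 3) ℂ) : MvPolynomial (Fin 3) ℂ :=
  V1 * pderiv 0 F + V2 * pderiv 1 F + V3 * pderiv 2 F

open scoped Polynomial Polynomial.Bivariate

section Multivariate

theorem map_derivation_of_forall_X {R σ A : Type*} [CommSemiring R] [CommSemiring A] [Algebra R A]
    (φ : MvPolynomial σ R →ₐ[R] A) (D : Derivation R (MvPolynomial σ R) (MvPolynomial σ R))
    (E : Derivation R A A) (h : ∀ i, φ (D (X i)) = E (φ (X i))) (p : MvPolynomial σ R) :
    φ (D p) = E (φ p) := by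
  induction p using MvPolynomial.induction_on with
  | C a => simp [← algebraMap_eq]
  | add p q hp hq => simp only [map_add, hp, hq]
  | mul_X p i hp => simp only [Derivation.leibniz, smul_eq_mul, map_add, map_mul, hp, h]

theorem dvd_sub_aeval_of_forall_dvd {R σ : Type*} [CommRing R] {a : MvPolynomial σ R}
    {f : σ → MvPolynomial σ R} (h : ∀ i, a ∣ X i - f i) (p : MvPolynomial σ R) :
    a ∣ p - aeval f p := by
  have hmk : (Ideal.Quotient.mkₐ R (Ideal.span {a})).comp (aeval f) =
      Ideal.Quotient.mkₐ R (Ideal.span {a}) := by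
    ext i
    simpa [Ideal.Quotient.eq, Ideal.mem_span_singleton] using dvd_sub_comm.mp (h i)
  rw [← Ideal.mem_span_singleton, ← Ideal.Quotient.eq]
  exact (DFunLike.congr_fun hmk p).symm

theorem totalDegree_ne_zero_of_irreducible {K σ : Type*} [Field K] {F : MvPolynomial σ K}
    (hF : Irreducible F) : F.totalDegree ≠ 0 := by
  intro h
  have hC : F = C (coeff 0 F) := totalDegree_eq_zero_iff_eq_C.mp h
  have hc : coeff 0 F ≠ 0 := fun h0 => hF.ne_zero (by rw [hC, h0, C_0])
  exact hF.not_isUnit (isUnit_iff_totalDegree_of_isReduced.mpr ⟨hc.isUnit, h⟩)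

variable {R σ : Type*} [CommSemiring R]

theorem totalDegree_mkDerivation_le {f : σ → MvPolynomial σ R} {d : ℕ}
    (hf : ∀ i, (f i).totalDegree ≤ d + 1) (p : MvPolynomial σ R) :
    (mkDerivation R f p).totalDegree ≤ p.totalDegree + d := by
  rw [p.as_sum, map_sum, ← p.as_sum]
  refine totalDegree_finsetSum_le fun s hs => ?_
  rw [mkDerivation_monomial]
  refine (totalDegree_smul_le _ _).trans (totalDegree_finsetSum_le fun i hi => ?_)
  have hs_deg : s.degree ≤ p.totalDegree := le_totalDegree hs
  have hsub : (s - Finsupp.single i 1).degree + 1 = s.degree := by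
    have hle : Finsupp.single i 1 ≤ s := by
      simpa [Nat.one_le_iff_ne_zero] using hi
    conv_rhs => rw [← tsub_add_cancel_of_le hle, map_add, Finsupp.degree_single]
  calc _ ≤ (s - Finsupp.single i 1).degree + (d + 1) :=
        (totalDegree_mul _ _).trans (add_le_add (totalDegree_monomial_le _ _) (hf i))
    _ ≤ p.totalDegree + d := by omega

theorem exists_eq_C_add_sum_of_totalDegree_le_one [Fintype σ] {p : MvPolynomial σ R}
    (hp : p.totalDegree ≤ 1) : ∃ (a : R) (b : σ → R), p = C a + ∑ i, C (b i) * X i := by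
  have hlin : homogeneousComponent 1 p ∈ Submodule.span R (Set.range X) := by
    rw [← homogeneousSubmodule_one_eq_span_X]
    exact homogeneousComponent_isHomogeneous 1 p
  obtain ⟨b, hb⟩ := (Submodule.mem_span_range_iff_exists_fun R).mp hlin
  refine ⟨coeff 0 p, b, ?_⟩
  simp only [C_mul', hb, ← homogeneousComponent_zero]
  conv_lhs => rw [← sum_homogeneousComponent p]
  rw [Finset.sum_subset (Finset.range_mono (Nat.succ_le_succ hp)) fun i _ hi =>
    homogeneousComponent_eq_zero i p (by simpa using hi)]
  simp [Finset.sum_range_succ]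

end Multivariate

section Planar

variable {R : Type*} [CommRing R]

theorem coeff_succ_X_sq_mul_derivative (g : R[X]) (j : ℕ) :
    (Polynomial.X ^ 2 * Polynomial.derivative g).coeff (j + 1) = j * g.coeff j := by
  rcases j with _ | j
  · simp [Polynomial.coeff_X_pow_mul']
  · simp [Polynomial.coeff_X_pow_mul', Polynomial.coeff_derivative, mul_comm]

theorem natDegree_le_one_of_X_sq_mul_derivative_eq_mul [IsDomain R] {g q : R[X]} (hg : g ≠ 0)
    (h : Polynomial.X ^ 2 * Polynomial.derivative g = q * g) : q.natDegree ≤ 1 := by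
  rcases eq_or_ne q 0 with rfl | hq
  · simp
  have hderiv : Polynomial.derivative g ≠ 0 := by
    rintro h0
    simp [h0, hq, hg] at h
  have hpos : g.natDegree ≠ 0 := mt Polynomial.derivative_of_natDegree_zero hderiv
  have hdeg : q.natDegree + g.natDegree ≤ 2 + (g.natDegree - 1) := by
    rw [← Polynomial.natDegree_mul hq hg, ← h]
    exact Polynomial.natDegree_mul_le_of_le (Polynomial.natDegree_X_pow_le 2)
      (Polynomial.natDegree_derivative_le g)
  omega

theorem eq_natDegree_mul_X_of_X_sq_mul_derivative_eq_mul [IsDomain R] {g q : R[X]} (hg : g ≠ 0)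
    (h : Polynomial.X ^ 2 * Polynomial.derivative g = q * g) :
    q = Polynomial.C (g.natDegree : R) * Polynomial.X := by
  obtain ⟨b, a, rfl⟩ := Polynomial.exists_eq_X_add_C_of_natDegree_le_one
    (natDegree_le_one_of_X_sq_mul_derivative_eq_mul hg h)
  have hcoeff (j : ℕ) : (j : R) * g.coeff j = b * g.coeff j + a * g.coeff (j + 1) := by
    rw [← coeff_succ_X_sq_mul_derivative, h]
    simp [add_mul, mul_assoc]
  have ha : a = 0 := by
    by_contra ha
    have hzero (j : ℕ) : g.coeff j = 0 := by
      induction j with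
      | zero => simpa [Polynomial.mul_coeff_zero, ha] using congr_arg (Polynomial.coeff · 0) h
      | succ j ih => simpa [ih, ha] using hcoeff j
    exact hg (Polynomial.ext hzero)
  have hb : (g.natDegree : R) = b := by
    refine mul_right_cancel₀ (Polynomial.leadingCoeff_ne_zero.mpr hg) ?_
    simpa [ha] using hcoeff g.natDegree
  rw [ha, hb, map_zero, add_zero]

/-- The derivation `-x² ∂/∂x + (x² - 2xy) ∂/∂y` of `R[x][y]`, to which the Halphen derivation
restricts on each plane `x_{k+1} = x_{k+2} = x`, `x_k = y`. The inner variable `x` is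
`Polynomial.C Polynomial.X`, and `∂/∂x` is differentiation of the coefficients in `R[x]`. -/
noncomputable def planarDerivation (R : Type*) [CommRing R] : Derivation R R[X][Y] R[X][Y] :=
  (Polynomial.C Polynomial.X ^ 2 - 2 * Polynomial.C Polynomial.X * Y : R[X][Y]) •
      Polynomial.derivative'.restrictScalars R -
    (Polynomial.C Polynomial.X ^ 2 : R[X][Y]) •
      PolynomialModule.equivPolynomialSelf.compDer Polynomial.derivative'.mapCoeffs

variable (R) in
theorem planarDerivation_C_X :
    planarDerivation R (Polynomial.C Polynomial.X) = -Polynomial.C Polynomial.X ^ 2 := by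
  simp [planarDerivation]

variable (R) in
theorem planarDerivation_Y :
    planarDerivation R Y = Polynomial.C Polynomial.X ^ 2 - 2 * Polynomial.C Polynomial.X * Y := by
  simp [planarDerivation]

theorem coeff_planarDerivation (G : R[X][Y]) (j : ℕ) :
    (planarDerivation R G).coeff j = (j + 1 : R[X]) * Polynomial.X ^ 2 * G.coeff (j + 1) -
      2 * (j : R[X]) * Polynomial.X * G.coeff j -
      Polynomial.X ^ 2 * Polynomial.derivative (G.coeff j) := by
  have hY : (Polynomial.C Polynomial.X * Y * Polynomial.derivative G).coeff j =
      (j : R[X]) * Polynomial.X * G.coeff j := by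
    rw [mul_assoc, Polynomial.coeff_C_mul]
    rcases j with _ | j
    · simp
    · simp only [Polynomial.coeff_X_mul, Polynomial.coeff_derivative]
      push_cast
      ring
  have hpartial : (PolynomialModule.equivPolynomialSelf.compDer
      (Polynomial.derivative' (R := R)).mapCoeffs G).coeff j =
        Polynomial.derivative (G.coeff j) := rfl
  have htwo : (2 : R[X][Y]) = Polynomial.C 2 := rfl
  simp only [planarDerivation, Derivation.sub_apply, Derivation.smul_apply, smul_eq_mul,
    Derivation.restrictScalars_apply, Polynomial.derivative'_apply, sub_mul, mul_assoc,
    Polynomial.coeff_sub, htwo, Polynomial.coeff_C_mul, ← Polynomial.C_pow, hpartial] at hY ⊢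
  rw [hY, Polynomial.coeff_derivative]
  ring

theorem natDegree_planarDerivation_le (G : R[X][Y]) :
    (planarDerivation R G).natDegree ≤ G.natDegree := by
  refine Polynomial.natDegree_le_iff_coeff_eq_zero.mpr fun j hj => ?_
  simp [coeff_planarDerivation, Polynomial.coeff_eq_zero_of_natDegree_lt hj,
    Polynomial.coeff_eq_zero_of_natDegree_lt (hj.trans (Nat.lt_succ_self j))]

variable [IsDomain R]

theorem cofactor_eq_of_planarDerivation_eq_mul {G Q : R[X][Y]} (hG : G ≠ 0)
    (h : planarDerivation R G = Q * G) :
    Q = Polynomial.C (Polynomial.C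
      (-(2 * G.natDegree + G.leadingCoeff.natDegree : ℕ) : R) * Polynomial.X) := by
  have hQ : Q.natDegree = 0 := by
    rcases eq_or_ne Q 0 with rfl | hQ
    · simp
    have hle := natDegree_planarDerivation_le G
    rw [h, Polynomial.natDegree_mul hQ hG] at hle
    omega
  obtain ⟨q, rfl⟩ := Polynomial.natDegree_eq_zero.mp hQ
  have htop : Polynomial.X ^ 2 * Polynomial.derivative G.leadingCoeff =
      -(q + 2 * (G.natDegree : R[X]) * Polynomial.X) * G.leadingCoeff := by
    have hcoeff := congr_arg (Polynomial.coeff · G.natDegree) h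
    simp only [coeff_planarDerivation, Polynomial.coeff_C_mul, Polynomial.coeff_natDegree,
      Polynomial.coeff_eq_zero_of_natDegree_lt (Nat.lt_succ_self _)] at hcoeff
    linear_combination -hcoeff
  have hq := eq_natDegree_mul_X_of_X_sq_mul_derivative_eq_mul
    (Polynomial.leadingCoeff_ne_zero.mpr hG) htop
  congr 1
  simp only [Nat.cast_add, Nat.cast_mul, map_neg, map_add, map_mul, map_natCast] at hq ⊢
  push_cast
  linear_combination -hq

theorem eq_C_C_of_planarDerivation_eq_zero [CharZero R] {G : R[X][Y]}
    (h : planarDerivation R G = 0) : ∃ c : R, G = Polynomial.C (Polynomial.C c) := by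
  rcases eq_or_ne G 0 with rfl | hG
  · exact ⟨0, by simp⟩
  have hcofactor := cofactor_eq_of_planarDerivation_eq_mul hG (h.trans (zero_mul G).symm)
  have hdeg : 2 * G.natDegree + G.leadingCoeff.natDegree = 0 := by
    simpa [-Nat.cast_add] using hcofactor.symm
  obtain ⟨g, rfl⟩ := Polynomial.natDegree_eq_zero.mp (show G.natDegree = 0 by omega)
  rw [Polynomial.leadingCoeff_C] at hdeg
  obtain ⟨c, rfl⟩ := Polynomial.natDegree_eq_zero.mp (show g.natDegree = 0 by omega)
  exact ⟨c, rfl⟩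

end Planar

section Halphen

variable (R : Type*) [CommRing R]

/-- The Halphen derivation of `R[x₁,x₂,x₃]`, over an arbitrary commutative ring. The addition of
`Fin 3` is cyclic, so the single formula gives `V₁`, `V₂` and `V₃`. -/
noncomputable def halphenDerivation :
    Derivation R (MvPolynomial (Fin 3) R) (MvPolynomial (Fin 3) R) :=
  mkDerivation R fun k => X (k + 1) * X (k + 2) - X k * (X (k + 1) + X (k + 2))

/-- The linear form defining the `k`-th invariant plane, indexed by the variable that it does not
involve: `x₁ - x₂`, `x₂ - x₃` and `x₃ - x₁` correspond to `k = 2`, `0` and `1`. -/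
noncomputable def diagonalForm (k : Fin 3) : MvPolynomial (Fin 3) R := X (k + 1) - X (k + 2)

/-- Restriction of polynomials to the plane where `diagonalForm R k` vanishes, in the coordinates
`y` for the `k`-th variable and `x` for the common value of the two others. -/
noncomputable def diagonalRestriction (k : Fin 3) : MvPolynomial (Fin 3) R →ₐ[R] R[X][Y] :=
  aeval fun i => if i = k then Y else Polynomial.C Polynomial.X

theorem isHomogeneous_diagonalForm (k : Fin 3) : (diagonalForm R k).IsHomogeneous 1 :=
  (isHomogeneous_X R _).sub (isHomogeneous_X R _)

theorem diagonalForm_ne_zero [Nontrivial R] (k : Fin 3) : diagonalForm R k ≠ 0 :=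
  sub_ne_zero.mpr (X_injective.ne (by fin_cases k <;> decide))

theorem not_isUnit_diagonalForm [Nontrivial R] (k : Fin 3) : ¬ IsUnit (diagonalForm R k) :=
  fun hu => by simpa [diagonalForm] using hu.map constantCoeff

theorem halphenDerivation_diagonalForm (k : Fin 3) :
    halphenDerivation R (diagonalForm R k) = -2 * X k * diagonalForm R k := by
  fin_cases k <;> simp [halphenDerivation, diagonalForm] <;> ring

variable {R}

theorem diagonalRestriction_halphenDerivation (k : Fin 3) (F : MvPolynomial (Fin 3) R) :
    diagonalRestriction R k (halphenDerivation R F) =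
      planarDerivation R (diagonalRestriction R k F) := by
  refine map_derivation_of_forall_X _ _ _ (fun i => ?_) F
  fin_cases k <;> fin_cases i <;>
    simp [halphenDerivation, diagonalRestriction, planarDerivation_C_X, planarDerivation_Y] <;> ring

theorem diagonalRestriction_eq_zero_iff (k : Fin 3) {F : MvPolynomial (Fin 3) R} :
    diagonalRestriction R k F = 0 ↔ diagonalForm R k ∣ F := by
  constructor
  · intro h
    let r : Fin 3 → MvPolynomial (Fin 3) R := fun i => if i = k then X k else X (k + 1)
    have hlift :
        (Polynomial.aevalAeval (X (k + 1)) (X k)).comp (diagonalRestriction R k) = aeval r := by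
      ext i
      by_cases hi : i = k <;> simp [diagonalRestriction, r, hi]
    have hdvd : diagonalForm R k ∣ F - aeval r F := by
      refine dvd_sub_aeval_of_forall_dvd (fun i => ?_) F
      obtain rfl | rfl | rfl : i = k ∨ i = k + 1 ∨ i = k + 2 := by omega
      · simp [r]
      · simp [r]
      · simpa [r, diagonalForm] using dvd_sub_comm.mp dvd_rfl
    rw [← hlift] at hdvd
    simpa [h] using hdvd
  · rintro ⟨G, rfl⟩
    fin_cases k <;> simp [diagonalRestriction, diagonalForm]

theorem eq_zero_of_forall_diagonalRestriction_eq {P : MvPolynomial (Fin 3) R}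
    (hdeg : P.totalDegree ≤ 1)
    (h : ∀ k, ∃ s : R, diagonalRestriction R k P = Polynomial.C (Polynomial.C s * Polynomial.X)) :
    P = 0 := by
  obtain ⟨a, b, rfl⟩ := exists_eq_C_add_sum_of_totalDegree_le_one hdeg
  have hb (k : Fin 3) : b k = 0 := by
    obtain ⟨s, hs⟩ := h k
    have hcoeff := congr_arg (fun G => (G.coeff 1).coeff 0) hs
    fin_cases k <;>
      simpa [diagonalRestriction, Fin.sum_univ_three, algHom_C, Polynomial.algebraMap_apply,
        Polynomial.coeff_C] using hcoeff
  have ha : a = 0 := by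
    obtain ⟨s, hs⟩ := h 0
    simpa [diagonalRestriction, hb, algHom_C] using congr_arg (fun G => (G.coeff 0).coeff 0) hs
  simp [ha, hb]

variable [IsDomain R]

theorem totalDegree_cofactor_le_one {F P : MvPolynomial (Fin 3) R} (hF : F ≠ 0)
    (h : halphenDerivation R F = P * F) : P.totalDegree ≤ 1 := by
  rcases eq_or_ne P 0 with rfl | hP
  · simp
  have hle : (halphenDerivation R F).totalDegree ≤ F.totalDegree + 1 := by
    refine totalDegree_mkDerivation_le (fun k => IsHomogeneous.totalDegree_le ?_) F
    have hX (i : Fin 3) := isHomogeneous_X R i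
    exact ((hX _).mul (hX _)).sub ((hX _).mul ((hX _).add (hX _)))
  rw [h, totalDegree_mul_of_isDomain hP hF] at hle
  omega

theorem exists_diagonalRestriction_cofactor_eq {k : Fin 3} {F P : MvPolynomial (Fin 3) R}
    (h : halphenDerivation R F = P * F) (hF : ¬ diagonalForm R k ∣ F) :
    ∃ s : R, diagonalRestriction R k P = Polynomial.C (Polynomial.C s * Polynomial.X) := by
  refine ⟨_, cofactor_eq_of_planarDerivation_eq_mul
    (mt (diagonalRestriction_eq_zero_iff k).mp hF) ?_⟩
  rw [← diagonalRestriction_halphenDerivation, h, map_mul]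

theorem halphenDerivation_eq_mul_of_diagonalForm_mul {k : Fin 3} {G Q : MvPolynomial (Fin 3) R}
    (h : halphenDerivation R (diagonalForm R k * G) = Q * (diagonalForm R k * G)) :
    halphenDerivation R G = (Q + 2 * X k) * G := by
  refine mul_left_cancel₀ (diagonalForm_ne_zero R k) ?_
  rw [Derivation.leibniz, halphenDerivation_diagonalForm, smul_eq_mul, smul_eq_mul] at h
  linear_combination h

variable [CharZero R]

theorem eq_zero_of_halphenDerivation_eq_natCast_mul_X_mul {k : Fin 3} {n : ℕ} (hn : n ≠ 0)
    {F : MvPolynomial (Fin 3) R}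
    (h : halphenDerivation R F = (n : MvPolynomial (Fin 3) R) * X k * F) : F = 0 := by
  induction hd : F.totalDegree using Nat.strong_induction_on generalizing F n with
  | _ d ih =>
  have hdvd : diagonalForm R k ∣ F := by
    by_contra hF
    obtain ⟨s, hs⟩ := exists_diagonalRestriction_cofactor_eq h hF
    have hcoeff := congr_arg (Polynomial.coeff · 1) hs
    simp [diagonalRestriction, Polynomial.coeff_C_succ, hn] at hcoeff
  obtain ⟨G, rfl⟩ := hdvd
  by_contra hne
  have hG : G ≠ 0 := right_ne_zero_of_mul hne
  have hlt : G.totalDegree < d := by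
    rw [← hd, totalDegree_mul_of_isDomain (diagonalForm_ne_zero R k) hG,
      (isHomogeneous_diagonalForm R k).totalDegree (diagonalForm_ne_zero R k)]
    omega
  refine hG (ih _ hlt (n := n + 2) (by omega) ?_ rfl)
  rw [halphenDerivation_eq_mul_of_diagonalForm_mul h]
  push_cast
  ring

theorem exists_eq_C_of_halphenDerivation_eq_zero {F : MvPolynomial (Fin 3) R}
    (h : halphenDerivation R F = 0) : ∃ c : R, F = C c := by
  obtain ⟨c, hc⟩ := eq_C_C_of_planarDerivation_eq_zero (G := diagonalRestriction R 0 F)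
    (by rw [← diagonalRestriction_halphenDerivation 0, h, map_zero])
  obtain ⟨G, hG⟩ : diagonalForm R 0 ∣ F - C c :=
    (diagonalRestriction_eq_zero_iff 0).mp (by simp [hc, algHom_C])
  have hDG : halphenDerivation R G = (0 + 2 * X 0) * G :=
    halphenDerivation_eq_mul_of_diagonalForm_mul
      (by rw [← hG, map_sub, h, derivation_C, sub_zero, zero_mul])
  have hG_zero : G = 0 := eq_zero_of_halphenDerivation_eq_natCast_mul_X_mul two_ne_zero
    (by simpa using hDG)
  exact ⟨c, sub_eq_zero.mp (by rw [hG, hG_zero, mul_zero])⟩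

theorem exists_diagonalForm_dvd {F P : MvPolynomial (Fin 3) R} (hF : F.totalDegree ≠ 0)
    (h : halphenDerivation R F = P * F) : ∃ k, diagonalForm R k ∣ F := by
  by_contra! hdvd
  have hF_zero : F ≠ 0 := by
    rintro rfl
    exact hF totalDegree_zero
  have hP : P = 0 := eq_zero_of_forall_diagonalRestriction_eq
    (totalDegree_cofactor_le_one hF_zero h)
    fun k => exists_diagonalRestriction_cofactor_eq h (hdvd k)
  obtain ⟨c, rfl⟩ := exists_eq_C_of_halphenDerivation_eq_zero (by rw [h, hP, zero_mul])
  exact hF (totalDegree_C c)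

end Halphen

theorem dH_eq_halphenDerivation (F : MvPolynomial (Fin 3) ℂ) : dH F = halphenDerivation ℂ F := by
  have hD : V1 • pderiv 0 + V2 • pderiv 1 + V3 • pderiv 2 = halphenDerivation ℂ := by
    ext1 i
    fin_cases i <;> simp [halphenDerivation, V1, V2, V3, pderiv_X]
  exact DFunLike.congr_fun hD F

theorem halphen_irreducible_darboux_classification_general {K : Type*} [Field K] [CharZero K]
    {F P : MvPolynomial (Fin 3) K} (hirr : Irreducible F) (hD : halphenDerivation K F = P * F) :
    ∃ c : K, c ≠ 0 ∧
      (F = C c * (X 0 - X 1) ∨ F = C c * (X 1 - X 2) ∨ F = C c * (X 2 - X 0)) := by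
  obtain ⟨k, G, rfl⟩ := exists_diagonalForm_dvd (totalDegree_ne_zero_of_irreducible hirr) hD
  obtain ⟨c, hc, rfl⟩ := isUnit_iff_eq_C_of_isReduced.mp
    ((hirr.isUnit_or_isUnit rfl).resolve_left (not_isUnit_diagonalForm K k))
  refine ⟨c, hc.ne_zero, ?_⟩
  fin_cases k <;> simp [diagonalForm, mul_comm]

/-- Every irreducible homogeneous polynomial `F ∈ ℂ[x₁,x₂,x₃]` of
degree `≥ 1` satisfying `d_H(F) = P·F` for some polynomial `P` is a nonzero scalar
multiple of one of `F₁ = x₁−x₂`, `F₂ = x₂−x₃`, `F₃ = x₃−x₁`. -/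
theorem halphen_irreducible_darboux_classification
    (F : MvPolynomial (Fin 3) ℂ) (m : ℕ) (hm : 1 ≤ m)
    (hhom : F.IsHomogeneous m) (hirr : Irreducible F)
    (P : MvPolynomial (Fin 3) ℂ) (hD : dH F = P * F) :
    ∃ c : ℂ, c ≠ 0 ∧
      (F = C c * (X 0 - X 1) ∨ F = C c * (X 1 - X 2) ∨ F = C c * (X 2 - X 0)) :=
  halphen_irreducible_darboux_classification_general hirr
    (dH_eq_halphenDerivation F ▸ hD)
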